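/- Fix n ≥ 0. Let Φ₄(n)⁺ be the (2n+2)×(2n+2) lower-triangular matrix over k[X,Y], with rows and columns indexed 0,…,2n+1, whose only nonzero entries are: (0,0) = z₃; (1,0) = −z₄, (1,1) = z₁z₄; for 1 ≤ j ≤ n: (2j, 2j−1) = −z₁z₃, (2j, 2j) = z₂z₃, and (2j+1, 2j−1) = z₁z₄, (2j+1, 2j) = −z₂z₄, (2j+1, 2j+1) = z₁z₄. Then det Φ₄(n)⁺ = z₁ⁿ⁺¹ z₂ⁿ z₃ⁿ⁺¹ z₄ⁿ⁺¹, and there exists a (2n+2)×(2n+2) matrix Ψ with entries in k[X,Y] such that Φ₄(n)⁺·Ψ = Ψ·Φ₄(n)⁺ = F·I₂ₙ₊₂. -/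

import Mathlib

/-! Cut `Φ₄(n)⁺` into `2 × 2` blocks. The result is block lower bidiagonal. Each diagonal block `A`
has a complementary factor `A'` with `A A' = A' A = F`, and subdiagonal blocks `B`, `B'` glue these
`n + 1` factorizations of `F` together: the product of the two glued matrices has
`B A' + A B'` below the diagonal and `B B'` one step further down, and both vanish. The determinant
is the product of the determinants of the diagonal blocks, namely `z₁z₃z₄` once and `F` the other
`n` times. -/

open Matrix

section LowerBidiagonal

variable {S : Type*} {n : ℕ}

/-- The lower bidiagonal matrix with diagonal `a` and subdiagonal `b`, given by its rows. The
entries may themselves be matrices, which makes it a block lower bidiagonal matrix. -/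
def lowerBidiagonal [AddZeroClass S] (a : Fin (n + 1) → S) (b : Fin n → S) :
    Matrix (Fin (n + 1)) (Fin (n + 1)) S :=
  of (Fin.cons (Pi.single 0 (a 0)) fun i ↦ Pi.single i.succ (a i.succ) + Pi.single i.castSucc (b i))

section AddZeroClass

variable [AddZeroClass S] (a : Fin (n + 1) → S) (b : Fin n → S)

theorem lowerBidiagonal_zero_apply (j : Fin (n + 1)) :
    lowerBidiagonal a b 0 j = Pi.single (M := fun _ ↦ S) 0 (a 0) j := rfl

theorem lowerBidiagonal_succ_apply (i : Fin n) (j : Fin (n + 1)) :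
    lowerBidiagonal a b i.succ j =
      Pi.single (M := fun _ ↦ S) i.succ (a i.succ) j +
        Pi.single (M := fun _ ↦ S) i.castSucc (b i) j := rfl

theorem lowerBidiagonal_apply_self (i : Fin (n + 1)) : lowerBidiagonal a b i i = a i := by
  cases i using Fin.cases with
  | zero => simp [lowerBidiagonal_zero_apply]
  | succ i => simp [lowerBidiagonal_succ_apply, i.castSucc_lt_succ.ne']

theorem isLowerTriangular_lowerBidiagonal : (lowerBidiagonal a b).IsLowerTriangular := by
  intro i j (hij : i < j)
  cases i using Fin.cases with
  | zero => simp [lowerBidiagonal_zero_apply, hij.ne']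
  | succ i =>
    simp [lowerBidiagonal_succ_apply, hij.ne', (i.castSucc_lt_succ.trans hij).ne']

end AddZeroClass

section NonUnitalNonAssocSemiring

variable [NonUnitalNonAssocSemiring S] {a a' : Fin (n + 1) → S} {b b' : Fin n → S}

theorem lowerBidiagonal_mul_zero_apply {ι : Type*} (M : Matrix (Fin (n + 1)) ι S) (j : ι) :
    (lowerBidiagonal a b * M) 0 j = a 0 * M 0 j := by
  simp [mul_apply, lowerBidiagonal_zero_apply, Pi.single_apply]

theorem lowerBidiagonal_mul_succ_apply {ι : Type*} (M : Matrix (Fin (n + 1)) ι S) (i : Fin n)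
    (j : ι) :
    (lowerBidiagonal a b * M) i.succ j = a i.succ * M i.succ j + b i * M i.castSucc j := by
  simp [mul_apply, lowerBidiagonal_succ_apply, Pi.single_apply, add_mul, Finset.sum_add_distrib]

theorem lowerBidiagonal_mul_lowerBidiagonal_eq_diagonal
    (h_sub : ∀ i, b i * a' i.castSucc + a i.succ * b' i = 0)
    (h_subsub : ∀ i j, i.castSucc = j.succ → b i * b' j = 0) :
    lowerBidiagonal a b * lowerBidiagonal a' b' = diagonal fun i ↦ a i * a' i := by
  ext i l
  cases i using Fin.cases with
  | zero =>
    rw [lowerBidiagonal_mul_zero_apply, lowerBidiagonal_zero_apply, diagonal_apply]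
    simp [Pi.single_apply, eq_comm]
  | succ i =>
    have mul_row_above : b i * lowerBidiagonal a' b' i.castSucc l =
        Pi.single (M := fun _ ↦ S) i.castSucc (b i * a' i.castSucc) l := by
      obtain hi | ⟨j, hj⟩ := i.castSucc.eq_zero_or_eq_succ
      · simp [hi, lowerBidiagonal_zero_apply, Pi.single_apply]
      · have := h_subsub i j hj
        simp [hj, lowerBidiagonal_succ_apply, Pi.single_apply, mul_add, this]
    rw [lowerBidiagonal_mul_succ_apply, mul_row_above, lowerBidiagonal_succ_apply, diagonal_apply]
    obtain rfl | hl := eq_or_ne l i.castSucc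
    · simp [i.castSucc_lt_succ.ne, i.castSucc_lt_succ.ne', add_comm, h_sub i]
    · simp [Pi.single_apply, hl, eq_comm]

end NonUnitalNonAssocSemiring

theorem lowerBidiagonal_mul_lowerBidiagonal_eq_smul_one {R : Type*} [NonAssocSemiring S]
    [SMulZeroClass R S] {a a' : Fin (n + 1) → S} {b b' : Fin n → S} {c : R}
    (h_diag : ∀ i, a i * a' i = c • 1)
    (h_sub : ∀ i, b i * a' i.castSucc + a i.succ * b' i = 0)
    (h_subsub : ∀ i j, i.castSucc = j.succ → b i * b' j = 0) :
    lowerBidiagonal a b * lowerBidiagonal a' b' = c • 1 := by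
  rw [lowerBidiagonal_mul_lowerBidiagonal_eq_diagonal h_sub h_subsub, ← diagonal_one,
    ← diagonal_smul]
  exact congrArg diagonal (funext h_diag)

end LowerBidiagonal

section BlockDeterminant

variable {m n R : Type*} [LinearOrder m] [Fintype m] [DecidableEq n] [Fintype n] [CommRing R]

theorem det_comp_of_isLowerTriangular (M : Matrix m m (Matrix n n R)) (hM : M.IsLowerTriangular) :
    (comp m m n n R M).det = ∏ i, (M i i).det := by
  rw [hM.comp.det_fintype, ← OrderDual.toDual.prod_comp]
  refine Finset.prod_congr rfl fun i _ ↦ ?_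
  let e : n ≃ {p : m × n // OrderDual.toDual p.1 = OrderDual.toDual i} :=
    { toFun r := ⟨(i, r), rfl⟩
      invFun p := p.1.2
      left_inv _ := rfl
      right_inv := by rintro ⟨⟨j, r⟩, hj⟩; obtain rfl : j = i := hj; rfl }
  exact (det_submatrix_equiv_self e _).symm

end BlockDeterminant

section TwoByTwoBlocks

theorem zero_fin_two {R : Type*} [Zero R] : (0 : Matrix (Fin 2) (Fin 2) R) = !![0, 0; 0, 0] :=
  eta_fin_two 0

/-- Row `r` of the `i`-th of `n + 1` blocks of size `2` is row `2 * i + r` of the whole matrix. -/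
def blockIndexEquiv (n : ℕ) : Fin (n + 1) × Fin 2 ≃ Fin (2 * n + 2) :=
  finProdFinEquiv.trans (finCongr (by ring))

theorem val_blockIndexEquiv {n : ℕ} (i : Fin (n + 1)) (r : Fin 2) :
    (blockIndexEquiv n (i, r)).val = r.val + 2 * i.val := rfl

/-- The algebra isomorphism that turns an `(n + 1) × (n + 1)` matrix of `2 × 2` blocks into a single
matrix with rows and columns numbered by `blockIndexEquiv`. -/
def flattenBlocks {R : Type*} [CommSemiring R] (n : ℕ) :
    Matrix (Fin (n + 1)) (Fin (n + 1)) (Matrix (Fin 2) (Fin 2) R) ≃ₐ[R]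
      Matrix (Fin (2 * n + 2)) (Fin (2 * n + 2)) R :=
  (compAlgEquiv (Fin (n + 1)) (Fin 2) R R).trans (reindexAlgEquiv R R (blockIndexEquiv n))

theorem flattenBlocks_apply_blockIndexEquiv {R : Type*} [CommSemiring R] {n : ℕ}
    (M : Matrix (Fin (n + 1)) (Fin (n + 1)) (Matrix (Fin 2) (Fin 2) R))
    (i j : Fin (n + 1)) (r s : Fin 2) :
    flattenBlocks n M (blockIndexEquiv n (i, r)) (blockIndexEquiv n (j, s)) = M i j r s := by
  simp [flattenBlocks]

theorem det_flattenBlocks {R : Type*} [CommRing R] {n : ℕ}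
    (M : Matrix (Fin (n + 1)) (Fin (n + 1)) (Matrix (Fin 2) (Fin 2) R)) :
    (flattenBlocks n M).det = (comp _ _ _ _ R M).det :=
  det_reindexAlgEquiv R R (blockIndexEquiv n) (comp _ _ _ _ R M)

end TwoByTwoBlocks

section MatrixFactorization

variable {R : Type*} [CommRing R] (z1 z2 z3 z4 : R) (n : ℕ)

/-- The matrix of relations `Φ₄(n)⁺`, for arbitrary elements `z1`, `z2`, `z3`, `z4` of a commutative
ring. -/
def relationMatrix : Matrix (Fin (2 * n + 2)) (Fin (2 * n + 2)) R :=
  of fun i j ↦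
    if i.val = 0 then (if j.val = 0 then z3 else 0)
    else if i.val = 1 then
      (if j.val = 0 then -z4 else if j.val = 1 then z1 * z4 else 0)
    else if i.val % 2 = 0 then
      (if j.val = i.val - 1 then -(z1 * z3)
       else if j.val = i.val then z2 * z3 else 0)
    else
      (if j.val = i.val - 2 then z1 * z4
       else if j.val = i.val - 1 then -(z2 * z4)
       else if j.val = i.val then z1 * z4 else 0)

/-- `Φ₄(n)⁺` cut into `2 × 2` blocks. -/
def relationBlocks : Matrix (Fin (n + 1)) (Fin (n + 1)) (Matrix (Fin 2) (Fin 2) R) :=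
  lowerBidiagonal
    (Fin.cons !![z3, 0; -z4, z1 * z4] fun _ ↦ !![z2 * z3, 0; -(z2 * z4), z1 * z4])
    fun _ ↦ !![0, -(z1 * z3); 0, z1 * z4]

/-- The complementary factor of `relationBlocks` in the matrix factorization of
`z1 * z2 * z3 * z4`. Its diagonal blocks complement those of `relationBlocks`, and its subdiagonal
block `B'` is chosen so that `B A' + A B' = 0`. -/
def complementBlocks : Matrix (Fin (n + 1)) (Fin (n + 1)) (Matrix (Fin 2) (Fin 2) R) :=
  lowerBidiagonal
    (Fin.cons !![z1 * z2 * z4, 0; z2 * z4, z2 * z3] fun _ ↦ !![z1 * z4, 0; z2 * z4, z2 * z3])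
    fun _ ↦ !![z1 * z4, z1 * z3; 0, 0]

theorem flattenBlocks_relationBlocks :
    flattenBlocks n (relationBlocks z1 z2 z3 z4 n) = relationMatrix z1 z2 z3 z4 n := by
  ext p q
  obtain ⟨⟨i, r⟩, rfl⟩ := (blockIndexEquiv n).surjective p
  obtain ⟨⟨j, s⟩, rfl⟩ := (blockIndexEquiv n).surjective q
  rw [flattenBlocks_apply_blockIndexEquiv, relationBlocks, relationMatrix, of_apply]
  simp only [val_blockIndexEquiv]
  cases i using Fin.cases with
  | zero =>
    simp only [lowerBidiagonal_zero_apply, Pi.single_apply, Fin.ext_iff, Fin.val_zero]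
    revert r s
    split_ifs <;>
    · simp only [Fin.forall_fin_two, Fin.cons_zero, of_apply, cons_val, Matrix.zero_apply,
        Fin.val_zero, Fin.val_one]
      grind
  | succ i =>
    simp only [lowerBidiagonal_succ_apply, Pi.single_apply, Fin.ext_iff, Fin.val_succ,
      Fin.val_castSucc]
    revert r s
    split_ifs <;>
    · simp only [Fin.forall_fin_two, Fin.cons_succ, of_apply, cons_val, Matrix.zero_apply,
        Matrix.add_apply, Fin.val_zero, Fin.val_one]
      grind

theorem det_relationMatrix :
    (relationMatrix z1 z2 z3 z4 n).det = z1 * z3 * z4 * (z1 * z2 * z3 * z4) ^ n := by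
  rw [← flattenBlocks_relationBlocks, det_flattenBlocks, relationBlocks,
    det_comp_of_isLowerTriangular _ (isLowerTriangular_lowerBidiagonal _ _)]
  simp only [lowerBidiagonal_apply_self, Fin.prod_univ_succ, Fin.cons_zero, Fin.cons_succ,
    det_fin_two_of, Finset.prod_const, Finset.card_univ, Fintype.card_fin]
  ring

theorem relationBlocks_mul_complementBlocks :
    relationBlocks z1 z2 z3 z4 n * complementBlocks z1 z2 z3 z4 n = (z1 * z2 * z3 * z4) • 1 := by
  refine lowerBidiagonal_mul_lowerBidiagonal_eq_smul_one
    (Fin.cases ?diag_zero fun i ↦ ?diag_succ) (fun i ↦ ?sub) fun _ _ _ ↦ ?subsub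
  case diag_zero | diag_succ =>
    simp only [Fin.cons_zero, Fin.cons_succ, one_fin_two, mul_fin_two, smul_of, smul_cons,
      smul_empty, smul_eq_mul]
    ring_nf
  case sub =>
    obtain hi | ⟨j, hi⟩ := i.castSucc.eq_zero_or_eq_succ <;>
    · simp only [hi, Fin.cons_zero, Fin.cons_succ, mul_fin_two, of_add_of, add_cons,
        head_cons, tail_cons, empty_add_empty, zero_fin_two]
      ring_nf
  case subsub =>
    simp only [mul_fin_two, zero_fin_two]
    ring_nf

theorem complementBlocks_mul_relationBlocks :
    complementBlocks z1 z2 z3 z4 n * relationBlocks z1 z2 z3 z4 n = (z1 * z2 * z3 * z4) • 1 := by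
  refine lowerBidiagonal_mul_lowerBidiagonal_eq_smul_one
    (Fin.cases ?diag_zero fun i ↦ ?diag_succ) (fun i ↦ ?sub) fun _ _ _ ↦ ?subsub
  case diag_zero | diag_succ =>
    simp only [Fin.cons_zero, Fin.cons_succ, one_fin_two, mul_fin_two, smul_of, smul_cons,
      smul_empty, smul_eq_mul]
    ring_nf
  case sub =>
    obtain hi | ⟨j, hi⟩ := i.castSucc.eq_zero_or_eq_succ <;>
    · simp only [hi, Fin.cons_zero, Fin.cons_succ, mul_fin_two, of_add_of, add_cons,
        head_cons, tail_cons, empty_add_empty, zero_fin_two]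
      ring_nf
  case subsub =>
    simp only [mul_fin_two, zero_fin_two]
    ring_nf

theorem stmt_15_general :
    (relationMatrix z1 z2 z3 z4 n).det = z1 ^ (n + 1) * z2 ^ n * z3 ^ (n + 1) * z4 ^ (n + 1) ∧
    ∃ Ψ : Matrix (Fin (2 * n + 2)) (Fin (2 * n + 2)) R,
      relationMatrix z1 z2 z3 z4 n * Ψ = (z1 * z2 * z3 * z4) • 1 ∧
      Ψ * relationMatrix z1 z2 z3 z4 n = (z1 * z2 * z3 * z4) • 1 := by
  refine ⟨?_, flattenBlocks n (complementBlocks z1 z2 z3 z4 n), ?_, ?_⟩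
  · rw [det_relationMatrix]
    ring
  · rw [← flattenBlocks_relationBlocks, ← map_mul, relationBlocks_mul_complementBlocks, map_smul,
      map_one]
  · rw [← flattenBlocks_relationBlocks, ← map_mul, complementBlocks_mul_relationBlocks, map_smul,
      map_one]

end MatrixFactorization

/-- For `n ≥ 0`, the `(2n+2)×(2n+2)` matrix of relations `Φ₄(n)⁺` of `M₄(n)⁺` has
determinant `z₁ⁿ⁺¹z₂ⁿz₃ⁿ⁺¹z₄ⁿ⁺¹` and is part of a matrix factorization of `F`. -/
theorem stmt_15 {k : Type*} [Field k] (lam : k) (h0 : lam ≠ 0) (h1 : lam ≠ 1)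
    (z1 z2 z3 z4 F : MvPolynomial (Fin 2) k)
    (hz1 : z1 = MvPolynomial.X 1) (hz2 : z2 = MvPolynomial.X 0)
    (hz3 : z3 = MvPolynomial.X 0 - MvPolynomial.X 1)
    (hz4 : z4 = MvPolynomial.X 0 - MvPolynomial.C lam * MvPolynomial.X 1)
    (hF : F = z1 * z2 * z3 * z4)
    (n : ℕ)
    (Φ : Matrix (Fin (2 * n + 2)) (Fin (2 * n + 2)) (MvPolynomial (Fin 2) k))
    (hΦ : ∀ i j : Fin (2 * n + 2), Φ i j =
      if i.val = 0 then (if j.val = 0 then z3 else 0)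
      else if i.val = 1 then
        (if j.val = 0 then -z4 else if j.val = 1 then z1 * z4 else 0)
      else if i.val % 2 = 0 then
        (if j.val = i.val - 1 then -(z1 * z3)
         else if j.val = i.val then z2 * z3 else 0)
      else
        (if j.val = i.val - 2 then z1 * z4
         else if j.val = i.val - 1 then -(z2 * z4)
         else if j.val = i.val then z1 * z4 else 0)) :
    Φ.det = z1 ^ (n + 1) * z2 ^ n * z3 ^ (n + 1) * z4 ^ (n + 1) ∧
    ∃ Ψ : Matrix (Fin (2 * n + 2)) (Fin (2 * n + 2)) (MvPolynomial (Fin 2) k),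
      Φ * Ψ = F • (1 : Matrix (Fin (2 * n + 2)) (Fin (2 * n + 2)) (MvPolynomial (Fin 2) k)) ∧
      Ψ * Φ = F • (1 : Matrix (Fin (2 * n + 2)) (Fin (2 * n + 2)) (MvPolynomial (Fin 2) k)) := by
  obtain rfl : Φ = relationMatrix z1 z2 z3 z4 n := Matrix.ext hΦ
  exact hF ▸ stmt_15_general z1 z2 z3 z4 n
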